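/- Let H be an ordered bipartite graph and let c > 1 be a real number. If there is a constant C₁ such that ex(n, A_H) ≤ C₁ · n^c for all positive integers n, then there is a constant C₂ such that ex_<(n, H) ≤ C₂ · n^c for all positive integers n. -/

import Mathlib

/-- A zero-one matrix `M` contains a zero-one matrix `A` if there are strictly increasing
injections of rows and columns such that every 1-entry of `A` corresponds to a 1-entry of `M`. -/
def matContains {m n a b : ℕ} (M : Fin m → Fin n → Bool) (A : Fin a → Fin b → Bool) : Prop :=
  ∃ f : Fin a → Fin m, ∃ g : Fin b → Fin n, StrictMono f ∧ StrictMono g ∧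
    ∀ i j, A i j = true → M (f i) (g j) = true

/-- The weight of a zero-one matrix: its number of 1-entries. -/
def matWeight {m n : ℕ} (M : Fin m → Fin n → Bool) : ℕ :=
  (Finset.univ.filter fun p : Fin m × Fin n => M p.1 p.2 = true).card

/-- The matrix extremal number `ex(n, A)`. -/
noncomputable def matEx {a b : ℕ} (n : ℕ) (A : Fin a → Fin b → Bool) : ℕ :=
  sSup {w : ℕ | ∃ M : Fin n → Fin n → Bool, ¬ matContains M A ∧ matWeight M = w}

/-- An ordered graph `G` on `Fin m` contains the ordered graph `H` on `Fin h` as an ordered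
subgraph if there is an order-preserving injective graph homomorphism from `H` to `G`. -/
def ordContains {m h : ℕ} (G : SimpleGraph (Fin m)) (H : SimpleGraph (Fin h)) : Prop :=
  ∃ f : Fin h → Fin m, StrictMono f ∧ ∀ u v, H.Adj u v → G.Adj (f u) (f v)

/-- The ordered extremal number `ex_<(n, H)`. -/
noncomputable def ordEx {h : ℕ} (n : ℕ) (H : SimpleGraph (Fin h)) : ℕ :=
  sSup {e : ℕ | ∃ G : SimpleGraph (Fin n), ¬ ordContains G H ∧ G.edgeSet.ncard = e}

open Classical in
/-- The zero-one matrix `A_H` of an ordered bipartite graph `H` on `Fin h` with vertex classes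
`X = {v : v < x}` and `Y = {v : x ≤ v}`. -/
noncomputable def AH (h x : ℕ) (hx : x ≤ h) (H : SimpleGraph (Fin h)) :
    Fin x → Fin (h - x) → Bool :=
  fun i j => decide (H.Adj ⟨(i : ℕ), lt_of_lt_of_le i.isLt hx⟩
    ⟨x + (j : ℕ), by have := j.isLt; omega⟩)

/-!
Cut the vertex set of an `H`-free graph on `2m` vertices into two halves. Each half induces an
`H`-free graph, and the edges between the halves form an `m × m` matrix avoiding `A_H`, since a copy
of `A_H` there would assemble into an ordered copy of `H`. Deleting one vertex when `n` is odd,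
`ex_<(n, H) ≤ 2 ex_<(⌊n/2⌋, H) + ex(⌊n/2⌋, A_H) + n`, and as `2 < 2 ^ c` this recursion sums
geometrically to `O(n ^ c)`.
-/

lemma le_mul_rpow_of_le_mul_div_add {f : ℕ → ℝ} {b : ℕ} {a C c : ℝ} (hb : 1 < b) (ha : 0 ≤ a)
    (hC : 0 ≤ C) (hc : 0 ≤ c) (hac : a < (b : ℝ) ^ c) (hf₀ : f 0 ≤ 0)
    (hf : ∀ n, 0 < n → f n ≤ a * f (n / b) + C * (n : ℝ) ^ c) (n : ℕ) :
    f n ≤ C / (1 - a / (b : ℝ) ^ c) * (n : ℝ) ^ c := by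
  have hratio : 0 < 1 - a / (b : ℝ) ^ c := sub_pos.2 ((div_lt_one (by positivity)).2 hac)
  set D := C / (1 - a / (b : ℝ) ^ c)
  have hfix : a * D / (b : ℝ) ^ c + C = D := by
    linear_combination -(div_mul_cancel₀ C hratio.ne')
  induction n using Nat.strong_induction_on with
  | _ n ih =>
    rcases n.eq_zero_or_pos with rfl | hn
    · exact hf₀.trans (by positivity)
    calc f n ≤ a * f (n / b) + C * (n : ℝ) ^ c := hf n hn
      _ ≤ a * (D * ((n / b : ℕ) : ℝ) ^ c) + C * (n : ℝ) ^ c := by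
        gcongr
        exact ih _ (Nat.div_lt_self hn hb)
      _ ≤ a * (D * ((n : ℝ) / b) ^ c) + C * (n : ℝ) ^ c := by
        gcongr
        exact Nat.cast_div_le
      _ = (a * D / (b : ℝ) ^ c + C) * (n : ℝ) ^ c := by
        rw [Real.div_rpow n.cast_nonneg b.cast_nonneg]
        ring
      _ = D * (n : ℝ) ^ c := by rw [hfix]

lemma strictMono_append {α : Type*} [Preorder α] {m n : ℕ} {a : Fin m → α} {b : Fin n → α}
    (ha : StrictMono a) (hb : StrictMono b) (hab : ∀ i j, a i < b j) :
    StrictMono (Fin.append a b) := by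
  intro i j hij
  induction i using Fin.addCases <;> induction j using Fin.addCases
  case left.left i j => simpa using ha hij
  case left.right i j => simpa using hab i j
  case right.left i j => exact absurd hij (j.isLt.le.trans (Nat.le_add_right m i)).not_gt
  case right.right i j => simpa using hb (by simpa using hij)

section Extremal

variable {a b h m n : ℕ}

lemma matWeight_le_mul (M : Fin m → Fin n → Bool) : matWeight M ≤ m * n :=
  (Finset.card_le_univ _).trans_eq (by simp)

lemma matWeight_le_matEx {A : Fin a → Fin b → Bool} {M : Fin n → Fin n → Bool}
    (hM : ¬ matContains M A) : matWeight M ≤ matEx n A :=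
  le_csSup ⟨n * n, by rintro _ ⟨M, -, rfl⟩; exact matWeight_le_mul M⟩ ⟨M, hM, rfl⟩

lemma matEx_le_mul_self (n : ℕ) (A : Fin a → Fin b → Bool) : matEx n A ≤ n * n :=
  csSup_le' (by rintro _ ⟨M, -, rfl⟩; exact matWeight_le_mul M)

lemma matEx_zero (A : Fin a → Fin b → Bool) : matEx 0 A = 0 :=
  Nat.le_zero.1 (matEx_le_mul_self 0 A)

lemma ncard_edgeSet_le_choose_two (G : SimpleGraph (Fin n)) : G.edgeSet.ncard ≤ n.choose 2 := by
  classical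
  rw [← G.coe_edgeFinset, Set.ncard_coe_finset]
  simpa only [Fintype.card_fin] using G.card_edgeFinset_le_card_choose_two

lemma ncard_edgeSet_le_ordEx {H : SimpleGraph (Fin h)} {G : SimpleGraph (Fin n)}
    (hG : ¬ ordContains G H) : G.edgeSet.ncard ≤ ordEx n H :=
  le_csSup ⟨n.choose 2, by rintro _ ⟨G, -, rfl⟩; exact ncard_edgeSet_le_choose_two G⟩ ⟨G, hG, rfl⟩

lemma ordEx_le_of_forall {H : SimpleGraph (Fin h)} {k : ℕ}
    (hk : ∀ G : SimpleGraph (Fin n), ¬ ordContains G H → G.edgeSet.ncard ≤ k) :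
    ordEx n H ≤ k :=
  csSup_le' (by rintro _ ⟨G, hG, rfl⟩; exact hk G hG)

lemma ordEx_le_choose_two (n : ℕ) (H : SimpleGraph (Fin h)) : ordEx n H ≤ n.choose 2 :=
  ordEx_le_of_forall fun G _ => ncard_edgeSet_le_choose_two G

lemma ordContains_of_comap {H : SimpleGraph (Fin h)} {G : SimpleGraph (Fin n)} {φ : Fin m → Fin n}
    (hφ : StrictMono φ) : ordContains (G.comap φ) H → ordContains G H :=
  fun ⟨f, hf, hadj⟩ => ⟨φ ∘ f, hφ.comp hf, hadj⟩

end Extremal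

section Cut

variable {h x m n : ℕ}

open Classical in
/-- The biadjacency matrix between the first `m` and the last `n` vertices of an ordered graph. It
is `AH (m + n) m` without the truncated subtraction in the column type. -/
noncomputable def cutMatrix (G : SimpleGraph (Fin (m + n))) : Fin m → Fin n → Bool :=
  fun i j => decide (G.Adj (Fin.castAdd n i) (Fin.natAdd m j))

lemma cutMatrix_eq_true_iff {G : SimpleGraph (Fin (m + n))} {i : Fin m} {j : Fin n} :
    cutMatrix G i j = true ↔ G.Adj (Fin.castAdd n i) (Fin.natAdd m j) := by
  simp only [cutMatrix, decide_eq_true_eq]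

lemma AH_cast_eq_true_iff {H : SimpleGraph (Fin (m + n))} {hm : m ≤ m + n}
    {hn : n = m + n - m} {i : Fin m} {j : Fin n} :
    AH (m + n) m hm H i (Fin.cast hn j) = true ↔ H.Adj (Fin.castAdd n i) (Fin.natAdd m j) := by
  simp only [AH, decide_eq_true_eq]
  rfl

lemma ncard_edgeSet_le_add_matWeight_cutMatrix (G : SimpleGraph (Fin (m + n))) :
    G.edgeSet.ncard ≤ (G.comap (Fin.castAdd n)).edgeSet.ncard +
      (G.comap (Fin.natAdd m)).edgeSet.ncard + matWeight (cutMatrix G) := by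
  set L := (G.comap (Fin.castAdd n)).edgeSet
  set R := (G.comap (Fin.natAdd m)).edgeSet
  set X := {p : Fin m × Fin n | cutMatrix G p.1 p.2 = true}
  have hX : X.ncard = matWeight (cutMatrix G) := by
    rw [matWeight, ← Set.ncard_coe_finset, Finset.coe_filter_univ]
  have hcover : G.edgeSet ⊆ Sym2.map (Fin.castAdd n) '' L ∪ Sym2.map (Fin.natAdd m) '' R ∪
      (fun p : Fin m × Fin n => s(Fin.castAdd n p.1, Fin.natAdd m p.2)) '' X := by
    rintro ⟨u, v⟩ (huv : G.Adj u v)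
    induction u using Fin.addCases <;> induction v using Fin.addCases
    case left.left i j => exact .inl (.inl ⟨s(i, j), huv, rfl⟩)
    case left.right i j => exact .inr ⟨(i, j), cutMatrix_eq_true_iff.2 huv, rfl⟩
    case right.left i j =>
      exact .inr ⟨(j, i), cutMatrix_eq_true_iff.2 huv.symm, Sym2.eq_swap⟩
    case right.right i j => exact .inl (.inr ⟨s(i, j), huv, rfl⟩)
  calc G.edgeSet.ncard
      ≤ _ := Set.ncard_le_ncard hcover (Set.toFinite _)
    _ ≤ (Sym2.map (Fin.castAdd n) '' L).ncard + (Sym2.map (Fin.natAdd m) '' R).ncard +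
        ((fun p : Fin m × Fin n => s(Fin.castAdd n p.1, Fin.natAdd m p.2)) '' X).ncard :=
      (Set.ncard_union_le _ _).trans (by gcongr; exact Set.ncard_union_le _ _)
    _ ≤ L.ncard + R.ncard + X.ncard := by
      gcongr <;> exact Set.ncard_image_le (Set.toFinite _)
    _ = L.ncard + R.ncard + matWeight (cutMatrix G) := by rw [hX]

lemma ncard_edgeSet_le_ordEx_add {H : SimpleGraph (Fin h)} {G : SimpleGraph (Fin (m + n))}
    (hG : ¬ ordContains G H) :
    G.edgeSet.ncard ≤ ordEx m H + ordEx n H + matWeight (cutMatrix G) := by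
  refine (ncard_edgeSet_le_add_matWeight_cutMatrix G).trans ?_
  gcongr <;> refine ncard_edgeSet_le_ordEx (mt (ordContains_of_comap ?_) hG)
  · exact Fin.strictMono_castAdd n
  · exact Fin.strictMono_natAdd m

lemma ordEx_succ_le (n : ℕ) (H : SimpleGraph (Fin h)) : ordEx (n + 1) H ≤ ordEx n H + n := by
  refine ordEx_le_of_forall fun G hG => ?_
  calc G.edgeSet.ncard ≤ ordEx n H + ordEx 1 H + matWeight (cutMatrix G) :=
        ncard_edgeSet_le_ordEx_add hG
    _ ≤ ordEx n H + Nat.choose 1 2 + n * 1 := by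
      gcongr
      · exact ordEx_le_choose_two 1 H
      · exact matWeight_le_mul _
    _ = ordEx n H + n := by simp

variable (hx : x ≤ h) {H : SimpleGraph (Fin h)}

lemma ordContains_of_matContains_cutMatrix
    (hbip : ∀ u v : Fin h, H.Adj u v → u < v → (u : ℕ) < x ∧ x ≤ (v : ℕ))
    {G : SimpleGraph (Fin (m + n))} (hG : matContains (cutMatrix G) (AH h x hx H)) :
    ordContains G H := by
  obtain ⟨y, rfl⟩ := Nat.exists_eq_add_of_le hx
  obtain ⟨f, g, hf, hg, hfg⟩ := hG
  have hy : y = x + y - x := (Nat.add_sub_cancel_left ..).symm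
  let φ : Fin (x + y) → Fin (m + n) :=
    Fin.append (Fin.castAdd n ∘ f) (Fin.natAdd m ∘ g ∘ Fin.cast hy)
  have hφ : StrictMono φ :=
    strictMono_append ((Fin.strictMono_castAdd n).comp hf)
      ((Fin.strictMono_natAdd m).comp (hg.comp (Fin.cast_strictMono hy)))
      fun i j => (f i).isLt.trans_le (Nat.le_add_right m _)
  have hcross (i : Fin x) (j : Fin y) (hij : H.Adj (Fin.castAdd y i) (Fin.natAdd x j)) :
      G.Adj (φ (Fin.castAdd y i)) (φ (Fin.natAdd x j)) := by
    simpa [φ] using cutMatrix_eq_true_iff.1 (hfg i (Fin.cast hy j) (AH_cast_eq_true_iff.2 hij))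
  refine ⟨φ, hφ, fun u v huv => ?_⟩
  wlog hlt : u < v generalizing u v
  · exact (this v u huv.symm (huv.ne.lt_or_gt.resolve_left hlt)).symm
  obtain ⟨hu, hv⟩ := hbip u v huv hlt
  induction u using Fin.addCases with
  | right i => simp at hu
  | left i =>
    induction v using Fin.addCases with
    | left j => exact absurd j.isLt hv.not_gt
    | right j => exact hcross i j huv

lemma ordEx_add_self_le
    (hbip : ∀ u v : Fin h, H.Adj u v → u < v → (u : ℕ) < x ∧ x ≤ (v : ℕ)) (m : ℕ) :
    ordEx (m + m) H ≤ 2 * ordEx m H + matEx m (AH h x hx H) := by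
  refine ordEx_le_of_forall fun G hG => ?_
  calc G.edgeSet.ncard ≤ ordEx m H + ordEx m H + matWeight (cutMatrix G) :=
        ncard_edgeSet_le_ordEx_add hG
    _ ≤ ordEx m H + ordEx m H + matEx m (AH h x hx H) := by
      gcongr
      exact matWeight_le_matEx (mt (ordContains_of_matContains_cutMatrix hx hbip) hG)
    _ = 2 * ordEx m H + matEx m (AH h x hx H) := by rw [two_mul]

lemma ordEx_le_two_mul_ordEx_half
    (hbip : ∀ u v : Fin h, H.Adj u v → u < v → (u : ℕ) < x ∧ x ≤ (v : ℕ)) (n : ℕ) :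
    ordEx n H ≤ 2 * ordEx (n / 2) H + matEx (n / 2) (AH h x hx H) + n := by
  have hdouble := ordEx_add_self_le hx hbip (n / 2)
  rw [← two_mul] at hdouble
  rcases n.even_or_odd with hn | hn
  · rw [Nat.two_mul_div_two_of_even hn] at hdouble
    omega
  · have hsucc := ordEx_succ_le (2 * (n / 2)) H
    rw [Nat.two_mul_div_two_add_one_of_odd hn] at hsucc
    omega

end Cut

/-- Let `H` be an ordered bipartite graph (classes `X = {v : v < x} < Y`) and `c > 1` a real
number. If `ex(n, A_H) ≤ C₁ · n^c` for all positive integers `n`, then there is a constant `C₂`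
such that `ex_<(n, H) ≤ C₂ · n^c` for all positive integers `n`. -/
theorem statement10 (h x : ℕ) (hx : x ≤ h) (H : SimpleGraph (Fin h))
    (hbip : ∀ u v : Fin h, H.Adj u v → u < v → (u : ℕ) < x ∧ x ≤ (v : ℕ))
    (c : ℝ) (hc : 1 < c) (C₁ : ℝ)
    (hbound : ∀ n : ℕ, 0 < n → (matEx n (AH h x hx H) : ℝ) ≤ C₁ * (n : ℝ) ^ c) :
    ∃ C₂ : ℝ, ∀ n : ℕ, 0 < n → (ordEx n H : ℝ) ≤ C₂ * (n : ℝ) ^ c := by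
  have hC₁ : 0 ≤ C₁ := by simpa using (Nat.cast_nonneg _).trans (hbound 1 one_pos)
  have hmat (n : ℕ) : (matEx n (AH h x hx H) : ℝ) ≤ C₁ * (n : ℝ) ^ c := by
    rcases n.eq_zero_or_pos with rfl | hn
    · rw [matEx_zero, Nat.cast_zero]
      positivity
    · exact hbound n hn
  have hrec (n : ℕ) (hn : 0 < n) :
      (ordEx n H : ℝ) ≤ 2 * ordEx (n / 2) H + (C₁ + 1) * (n : ℝ) ^ c :=
    calc (ordEx n H : ℝ)
        ≤ 2 * ordEx (n / 2) H + matEx (n / 2) (AH h x hx H) + n :=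
          mod_cast ordEx_le_two_mul_ordEx_half hx hbip n
      _ ≤ 2 * ordEx (n / 2) H + C₁ * (n : ℝ) ^ c + (n : ℝ) ^ c := by
          gcongr
          · exact (hmat (n / 2)).trans (by gcongr; exact Nat.div_le_self n 2)
          · exact Real.self_le_rpow_of_one_le (mod_cast hn) hc.le
      _ = 2 * ordEx (n / 2) H + (C₁ + 1) * (n : ℝ) ^ c := by ring
  have h2c : (2 : ℝ) < (2 : ℕ) ^ c := mod_cast Real.self_lt_rpow_of_one_lt one_lt_two hc
  have hzero : (ordEx 0 H : ℝ) ≤ 0 := mod_cast ordEx_le_choose_two 0 H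
  exact ⟨_, fun n _ => le_mul_rpow_of_le_mul_div_add one_lt_two zero_le_two (by positivity)
    (by positivity) h2c hzero hrec n⟩
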